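/- arXiv:2203.03443 — 9 statements merged into one kernel-verified Lean document; each statement's English description precedes it below -/
import Mathlib

section
/- Let n ≥ 1, C ≥ 1, let K be a symmetric positive semidefinite real n×n matrix, let λ > 0 be a regularization parameter, and let Y ∈ ℝ^{n×C} be a target matrix. Set A = K (K + λ I_n)⁻¹. For each index i, let the leave-one-out prediction be the vector f^{-i}(x_i) ∈ ℝ^C whose k-th component is (k^{(i)})ᵀ (K^{(i)} + λ I_{n-1})⁻¹ Y^{(i)}_{•k}, where K^{(i)} is K with its i-th row and column deleted, k^{(i)} is the i-th column of K with its i-th entry deleted, and Y^{(i)} is Y with its i-th row deleted. Then for every i with A_{ii} ≠ 1 and every k ∈ {1,…,C}, the leave-one-out residual satisfies Y_{ik} − f^{-i}_k(x_i) = (Y_{ik} − (A Y)_{ik}) / (1 − A_{ii}). Consequently, the leave-one-out mean squared loss equals (1/n) Σ_{i=1}^n Σ_{k=1}^C ((Y_{ik} − (AY)_{ik})/(1 − A_{ii}))². -/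
open Matrix Finset

/-- **Closed-form leave-one-out residual and loss for kernel ridge regression.**
For a symmetric PSD kernel `K`, regularization `lam > 0`, targets `Y`, smoother
`A = K (K + lam I)⁻¹`, and leave-one-out predictions
`f i k = (k⁽ⁱ⁾)ᵀ (K⁽ⁱ⁾ + lam I)⁻¹ Y⁽ⁱ⁾_{•k}` (submatrices with index `i` deleted),
the LOO residual is `(Y i k - (A Y) i k)/(1 - A i i)`, and the LOO mean squared
loss has the corresponding closed form. -/
theorem loo_residual_and_loss
    (n C : ℕ) (hn : 1 ≤ n) (hC : 1 ≤ C)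
    (K : Matrix (Fin n) (Fin n) ℝ) (hK : K.PosSemidef)
    (lam : ℝ) (hlam : 0 < lam)
    (Y : Matrix (Fin n) (Fin C) ℝ)
    (A : Matrix (Fin n) (Fin n) ℝ)
    (hA : A = K * (K + lam • (1 : Matrix (Fin n) (Fin n) ℝ))⁻¹)
    (f : Fin n → Fin C → ℝ)
    (hf : ∀ (i : Fin n) (k : Fin C),
      f i k = ∑ a : {j : Fin n // j ≠ i}, ∑ b : {j : Fin n // j ≠ i},
        K i a.val *
          ((K.submatrix (fun a : {j : Fin n // j ≠ i} => a.val)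
              (fun b : {j : Fin n // j ≠ i} => b.val)
            + lam • (1 : Matrix {j : Fin n // j ≠ i} {j : Fin n // j ≠ i} ℝ))⁻¹ a b) *
          Y b.val k) :
    (∀ i : Fin n, A i i ≠ 1 → ∀ k : Fin C,
        Y i k - f i k = (Y i k - (A * Y) i k) / (1 - A i i)) ∧
    ((∀ i : Fin n, A i i ≠ 1) →
      (1 / (n : ℝ)) * ∑ i : Fin n, ∑ k : Fin C, (Y i k - f i k) ^ 2 =
      (1 / (n : ℝ)) * ∑ i : Fin n, ∑ k : Fin C,
        ((Y i k - (A * Y) i k) / (1 - A i i)) ^ 2) := by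
  have hpd : (K + lam • (1 : Matrix (Fin n) (Fin n) ℝ)).PosDef :=
    Matrix.PosDef.posSemidef_add hK (Matrix.PosDef.one.smul hlam)
  have hdet : IsUnit (K + lam • (1 : Matrix (Fin n) (Fin n) ℝ)).det :=
    (Matrix.isUnit_iff_isUnit_det _).1 hpd.isUnit
  have main : ∀ i : Fin n, A i i ≠ 1 → ∀ k : Fin C,
        Y i k - f i k = (Y i k - (A * Y) i k) / (1 - A i i) := by
    intro i hi k
    obtain ⟨G, hG⟩ : ∃ G, G = (K + lam • (1 : Matrix (Fin n) (Fin n) ℝ))⁻¹ := ⟨_, rfl⟩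
    have hGM : G * (K + lam • (1 : Matrix (Fin n) (Fin n) ℝ)) = 1 := by
      rw [hG]; exact Matrix.nonsing_inv_mul _ hdet
    have hMG : (K + lam • (1 : Matrix (Fin n) (Fin n) ℝ)) * G = 1 := by
      rw [hG]; exact Matrix.mul_nonsing_inv _ hdet
    have hA' : A = 1 - lam • G := by
      rw [hA, ← hG, ← hMG, add_mul, smul_mul_assoc, one_mul, add_sub_cancel_right]
    obtain ⟨B, hB⟩ : ∃ B, B = (K.submatrix (fun a : {j : Fin n // j ≠ i} => a.val)
              (fun b : {j : Fin n // j ≠ i} => b.val)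
            + lam • (1 : Matrix {j : Fin n // j ≠ i} {j : Fin n // j ≠ i} ℝ)) := ⟨_, rfl⟩
    have hBpd : B.PosDef := by
      rw [hB]
      exact Matrix.PosDef.posSemidef_add (hK.submatrix _) (Matrix.PosDef.one.smul hlam)
    have hBdet : IsUnit B.det := (Matrix.isUnit_iff_isUnit_det _).1 hBpd.isUnit
    have hBB : B * B⁻¹ = 1 := Matrix.mul_nonsing_inv _ hBdet
    have split : ∀ F : Fin n → ℝ, ∑ j, F j = F i + ∑ a : {j : Fin n // j ≠ i}, F a.val := by
      intro F
      rw [Fintype.sum_eq_add_sum_subtype_ne F i]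
    have hrow : (fun a : {j : Fin n // j ≠ i} => G i a.val) ᵥ* B
        = (-G i i) • (fun a : {j : Fin n // j ≠ i} => K i a.val) := by
      ext b
      have h1 := congrFun (congrFun hGM i) b.val
      rw [Matrix.mul_apply, split, Matrix.one_apply_ne b.2.symm] at h1
      have h2 : ((fun a : {j : Fin n // j ≠ i} => G i a.val) ᵥ* B) b =
        ∑ a : {j : Fin n // j ≠ i}, G i a.val *
          (K + lam • (1 : Matrix (Fin n) (Fin n) ℝ)) a.val b.val := by
        rw [hB]
        simp [Matrix.vecMul, dotProduct, Matrix.one_apply, Subtype.ext_iff]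
      rw [h2]
      simp only [Matrix.add_apply, Matrix.smul_apply, Matrix.one_apply_ne b.2.symm,
        smul_eq_mul, mul_zero, add_zero, Pi.smul_apply] at h1 ⊢
      linarith
    have hg : (fun a : {j : Fin n // j ≠ i} => G i a.val)
        = (-G i i) • ((fun a : {j : Fin n // j ≠ i} => K i a.val) ᵥ* B⁻¹) := by
      rw [← Matrix.smul_vecMul, ← hrow, Matrix.vecMul_vecMul, hBB, Matrix.vecMul_one]
    have hfi : f i k = ∑ b : {j : Fin n // j ≠ i},
        ((fun a : {j : Fin n // j ≠ i} => K i a.val) ᵥ* B⁻¹) b * Y b.val k := by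
      rw [hf, ← hB, Finset.sum_comm]
      simp only [Matrix.vecMul, dotProduct, Finset.sum_mul]
    have hGY : (G * Y) i k = G i i * (Y i k - f i k) := by
      rw [Matrix.mul_apply, split, hfi, mul_sub, Finset.mul_sum, sub_eq_add_neg,
        ← Finset.sum_neg_distrib]
      congr 1
      refine Finset.sum_congr rfl fun b _ => ?_
      have := congrFun hg b
      simp only [Pi.smul_apply, smul_eq_mul] at this
      rw [this]; ring
    have e1 : 1 - A i i = lam * G i i := by simp [hA']
    have e2 : Y i k - (A * Y) i k = lam * (G * Y) i k := by
      simp [hA', Matrix.sub_mul]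
    have hne : lam * G i i ≠ 0 := by
      rw [← e1]; exact sub_ne_zero.2 (Ne.symm hi)
    rw [e1, e2, hGY, eq_div_iff hne]; ring
  refine ⟨main, fun h => ?_⟩
  congr 1
  refine Finset.sum_congr rfl fun i _ => Finset.sum_congr rfl fun k _ => ?_
  rw [main i (h i) k]
end

section
/- Let n ≥ 1, C ≥ 1, let K be a symmetric positive semidefinite real n×n matrix, λ > 0, Y ∈ ℝ^{n×C}, and A = K(K + λI_n)⁻¹. For each i, let f^{-i}(x_i) ∈ ℝ^C be the leave-one-out prediction with k-th component (k^{(i)})ᵀ(K^{(i)} + λI_{n-1})⁻¹Y^{(i)}_{•k} (submatrices obtained by deleting the i-th row/column/entry). Define Δ^λ_{ik} = (Y_{ik} − (AY)_{ik})/(1 − A_{ii}). Then for every i with A_{ii} < 1, a coordinate k maximizes the vector f^{-i}(x_i) if and only if k maximizes the vector Y_{i•} − Δ^λ_{i•}; in particular argmax_k f^{-i}_k(x_i) = (Y_{i•} − Δ^λ_{i•})*, so the leave-one-out accuracy equals (1/n) Σ_{i=1}^n 1{(Y_{i•} − Δ^λ_{i•})* = (Y_{i•})*}. -/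
open Matrix Finset

theorem loo_key {n : ℕ} (K : Matrix (Fin n) (Fin n) ℝ) (hK : K.PosSemidef)
    (lam : ℝ) (hlam : 0 < lam) (y : Fin n → ℝ) (i : Fin n) (c : ℝ)
    (hc : c = ∑ a : {j : Fin n // j ≠ i}, ∑ b : {j : Fin n // j ≠ i},
        K i a.val *
          ((K.submatrix (fun a : {j : Fin n // j ≠ i} => a.val)
              (fun b : {j : Fin n // j ≠ i} => b.val)
            + lam • (1 : Matrix {j : Fin n // j ≠ i} {j : Fin n // j ≠ i} ℝ))⁻¹ a b) *
          y b.val) :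
    ((K + lam • (1 : Matrix (Fin n) (Fin n) ℝ))⁻¹ *ᵥ y) i =
      (K + lam • (1 : Matrix (Fin n) (Fin n) ℝ))⁻¹ i i * (y i - c) := by
  have hM : (K + lam • (1 : Matrix (Fin n) (Fin n) ℝ)).PosDef :=
    Matrix.PosDef.posSemidef_add hK (Matrix.PosDef.one.smul hlam)
  have hP : (K.submatrix (fun a : {j : Fin n // j ≠ i} => a.val)
              (fun b : {j : Fin n // j ≠ i} => b.val)
            + lam • (1 : Matrix {j : Fin n // j ≠ i} {j : Fin n // j ≠ i} ℝ)).PosDef :=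
    Matrix.PosDef.posSemidef_add (hK.submatrix _) (Matrix.PosDef.one.smul hlam)
  set M := K + lam • (1 : Matrix (Fin n) (Fin n) ℝ) with hMdef
  set P := K.submatrix (fun a : {j : Fin n // j ≠ i} => a.val)
              (fun b : {j : Fin n // j ≠ i} => b.val)
            + lam • (1 : Matrix {j : Fin n // j ≠ i} {j : Fin n // j ≠ i} ℝ) with hPdef
  have hMu : IsUnit M.det := (Matrix.isUnit_iff_isUnit_det _).1 hM.isUnit
  have hPu : IsUnit P.det := (Matrix.isUnit_iff_isUnit_det _).1 hP.isUnit
  let w : {j : Fin n // j ≠ i} → ℝ := P⁻¹ *ᵥ (fun b => y b.val)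
  have hw : P *ᵥ w = fun b => y b.val := by
    simp only [w, Matrix.mulVec_mulVec, Matrix.mul_nonsing_inv _ hPu, Matrix.one_mulVec]
  have hcw : c = ∑ a : {j : Fin n // j ≠ i}, K i a.val * w a := by
    rw [hc]
    refine Finset.sum_congr rfl fun a _ => ?_
    simp only [w, Matrix.mulVec, dotProduct, Finset.mul_sum, mul_assoc]
  let α : Fin n → ℝ := fun j => if h : j ≠ i then w ⟨j, h⟩ else 0
  have hαi : α i = 0 := by simp [α]
  have hαa : ∀ a : {j : Fin n // j ≠ i}, α a.val = w a := fun a => by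
    simp only [α, dif_pos a.2]
  have hMα : M *ᵥ α = y + Pi.single i (c - y i) := by
    ext r
    have h1 : (M *ᵥ α) r = ∑ a : {j : Fin n // j ≠ i}, M r a.val * w a := by
      simp only [Matrix.mulVec, dotProduct]
      rw [Fintype.sum_eq_add_sum_subtype_ne _ i, hαi]
      simp only [hαa, mul_zero, zero_add]
    rw [h1]
    by_cases hr : r = i
    · subst hr
      simp only [Pi.add_apply, Pi.single_eq_same, add_sub_cancel]
      rw [hcw]
      refine Finset.sum_congr rfl fun a _ => ?_
      simp [hMdef, Matrix.one_apply_ne a.2.symm]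
    · have h2 := congrFun hw ⟨r, hr⟩
      simp only [Pi.add_apply, Pi.single_eq_of_ne hr, add_zero]
      rw [← h2]
      simp only [Matrix.mulVec, dotProduct]
      refine Finset.sum_congr rfl fun a _ => ?_
      simp [hMdef, hPdef, Matrix.one_apply, Subtype.ext_iff]
  have h3 : M⁻¹ *ᵥ (M *ᵥ α) = α := by
    rw [Matrix.mulVec_mulVec, Matrix.nonsing_inv_mul _ hMu, Matrix.one_mulVec]
  rw [hMα, Matrix.mulVec_add] at h3
  have h4 := congrFun h3 i
  rw [hαi, Pi.add_apply, Matrix.mulVec_single] at h4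
  simp at h4
  linarith

/-- **Closed-form leave-one-out accuracy for kernel ridge regression.**
With smoother `A = K (K + lam I)⁻¹`, leave-one-out predictions `f i` and
residuals `Δ i k = (Y i k - (A Y) i k)/(1 - A i i)`, for every `i` with
`A i i < 1` a coordinate `k` maximizes `f i` iff it maximizes `Y i • - Δ i •`;
hence, for any argmax-selection `star` (which picks a maximal coordinate and
depends only on the set of maximizers), the LOO accuracy equals
`(1/n) ∑ i 1{(Y i • - Δ i •)* = (Y i •)*}`. -/
theorem loo_accuracy_closed_form
    (n C : ℕ) (hn : 1 ≤ n) (hC : 1 ≤ C)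
    (K : Matrix (Fin n) (Fin n) ℝ) (hK : K.PosSemidef)
    (lam : ℝ) (hlam : 0 < lam)
    (Y : Matrix (Fin n) (Fin C) ℝ)
    (A : Matrix (Fin n) (Fin n) ℝ)
    (hA : A = K * (K + lam • (1 : Matrix (Fin n) (Fin n) ℝ))⁻¹)
    (f : Fin n → Fin C → ℝ)
    (hf : ∀ (i : Fin n) (k : Fin C),
      f i k = ∑ a : {j : Fin n // j ≠ i}, ∑ b : {j : Fin n // j ≠ i},
        K i a.val *
          ((K.submatrix (fun a : {j : Fin n // j ≠ i} => a.val)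
              (fun b : {j : Fin n // j ≠ i} => b.val)
            + lam • (1 : Matrix {j : Fin n // j ≠ i} {j : Fin n // j ≠ i} ℝ))⁻¹ a b) *
          Y b.val k)
    (Δ : Fin n → Fin C → ℝ)
    (hΔ : ∀ (i : Fin n) (k : Fin C),
      Δ i k = (Y i k - (A * Y) i k) / (1 - A i i))
    (star : (Fin C → ℝ) → Fin C)
    (hstar : ∀ (v : Fin C → ℝ) (k : Fin C), v k ≤ v (star v))
    (hstar' : ∀ v w : Fin C → ℝ,
      {k : Fin C | ∀ k' : Fin C, v k' ≤ v k} = {k : Fin C | ∀ k' : Fin C, w k' ≤ w k} →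
      star v = star w) :
    (∀ i : Fin n, A i i < 1 → ∀ k : Fin C,
        (∀ k' : Fin C, f i k' ≤ f i k) ↔
        (∀ k' : Fin C, Y i k' - Δ i k' ≤ Y i k - Δ i k)) ∧
    ((∀ i : Fin n, A i i < 1) →
      (1 / (n : ℝ)) * ∑ i : Fin n, (if star (f i) = star (fun k => Y i k) then (1 : ℝ) else 0) =
      (1 / (n : ℝ)) * ∑ i : Fin n,
        (if star (fun k => Y i k - Δ i k) = star (fun k => Y i k) then (1 : ℝ) else 0)) := by
  have hM : (K + lam • (1 : Matrix (Fin n) (Fin n) ℝ)).PosDef :=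
    Matrix.PosDef.posSemidef_add hK (Matrix.PosDef.one.smul hlam)
  have hMu : IsUnit (K + lam • (1 : Matrix (Fin n) (Fin n) ℝ)).det :=
    (Matrix.isUnit_iff_isUnit_det _).1 hM.isUnit
  have hA' : A = 1 - lam • (K + lam • (1 : Matrix (Fin n) (Fin n) ℝ))⁻¹ := by
    have h := Matrix.mul_nonsing_inv _ hMu
    rw [Matrix.add_mul, Matrix.smul_mul, Matrix.one_mul, ← hA] at h
    exact eq_sub_of_add_eq h
  have key : ∀ i : Fin n, A i i < 1 → ∀ k, f i k = Y i k - Δ i k := by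
    intro i hi k
    have h := loo_key K hK lam hlam (fun j => Y j k) i (f i k) (hf i k)
    have h1 : 1 - A i i = lam * (K + lam • (1 : Matrix (Fin n) (Fin n) ℝ))⁻¹ i i := by
      rw [hA']; simp
    have h2 : Y i k - (A * Y) i k =
        lam * ((K + lam • (1 : Matrix (Fin n) (Fin n) ℝ))⁻¹ *ᵥ (fun j => Y j k)) i := by
      rw [hA', Matrix.sub_mul, Matrix.one_mul, Matrix.smul_mul]
      simp [Matrix.mul_apply, Matrix.mulVec, dotProduct]
    have h3 : 1 - A i i ≠ 0 := by linarith
    have h4 : Δ i k = Y i k - f i k := by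
      rw [hΔ, div_eq_iff h3, h2, h, h1]; ring
    rw [h4]; ring
  refine ⟨fun i hi k => ?_, fun hi => ?_⟩
  · simp only [key i hi]
  · have : ∀ i, f i = fun k => Y i k - Δ i k := fun i => funext (key i (hi i))
    simp only [this]
end

section
/- Let n ≥ 1, C ≥ 1, let K be a symmetric positive semidefinite real n×n matrix, λ > 0, Y ∈ ℝ^{n×C}, and A = K(K + λI_n)⁻¹. Fix an index i with A_{ii} ≠ 1, and let f^{-i}(x_i) ∈ ℝ^C be the leave-one-out prediction with components (k^{(i)})ᵀ(K^{(i)} + λI_{n-1})⁻¹Y^{(i)}_{•k}. Define the modified target matrix Ỹ ∈ ℝ^{n×C} by Ỹ_{jk} = Y_{jk} for j ≠ i and Ỹ_{ik} = f^{-i}_k(x_i). Then the full-data ridge prediction on the modified targets reproduces the leave-one-out prediction at row i: (A Ỹ)_{ik} = Ỹ_{ik} for all k ∈ {1,…,C}. -/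
open Matrix Finset

/-- **Fixed-point property of the leave-one-out model.**
If the left-out target at row `i` is replaced by the leave-one-out prediction
`f k = (k⁽ⁱ⁾)ᵀ (K⁽ⁱ⁾ + lam I)⁻¹ Y⁽ⁱ⁾_{•k}`, then the full-data ridge prediction
on the modified targets `Ỹ` reproduces that prediction at row `i`:
`(A Ỹ) i k = Ỹ i k` for all `k`, where `A = K (K + lam I)⁻¹`. -/
theorem loo_fixed_point
    (n C : ℕ) (hn : 1 ≤ n) (hC : 1 ≤ C)
    (K : Matrix (Fin n) (Fin n) ℝ) (hK : K.PosSemidef)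
    (lam : ℝ) (hlam : 0 < lam)
    (Y : Matrix (Fin n) (Fin C) ℝ)
    (A : Matrix (Fin n) (Fin n) ℝ)
    (hA : A = K * (K + lam • (1 : Matrix (Fin n) (Fin n) ℝ))⁻¹)
    (i : Fin n) (hi : A i i ≠ 1)
    (f : Fin C → ℝ)
    (hf : ∀ k : Fin C,
      f k = ∑ a : {j : Fin n // j ≠ i}, ∑ b : {j : Fin n // j ≠ i},
        K i a.val *
          ((K.submatrix (fun a : {j : Fin n // j ≠ i} => a.val)
              (fun b : {j : Fin n // j ≠ i} => b.val)
            + lam • (1 : Matrix {j : Fin n // j ≠ i} {j : Fin n // j ≠ i} ℝ))⁻¹ a b) *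
          Y b.val k)
    (Ytil : Matrix (Fin n) (Fin C) ℝ)
    (hYtil : ∀ (j : Fin n) (k : Fin C), Ytil j k = if j = i then f k else Y j k) :
    ∀ k : Fin C, (A * Ytil) i k = Ytil i k := by
  intro k
  have hM : (K + lam • (1 : Matrix (Fin n) (Fin n) ℝ)).PosDef :=
    Matrix.PosDef.posSemidef_add hK (Matrix.PosDef.one.smul hlam)
  have hN : (K.submatrix (fun a : {j : Fin n // j ≠ i} => a.val)
              (fun b : {j : Fin n // j ≠ i} => b.val)
            + lam • (1 : Matrix {j : Fin n // j ≠ i} {j : Fin n // j ≠ i} ℝ)).PosDef :=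
    Matrix.PosDef.posSemidef_add (hK.submatrix _) (Matrix.PosDef.one.smul hlam)
  have hfk := hf k
  set N := (K.submatrix (fun a : {j : Fin n // j ≠ i} => a.val)
              (fun b : {j : Fin n // j ≠ i} => b.val)
            + lam • (1 : Matrix {j : Fin n // j ≠ i} {j : Fin n // j ≠ i} ℝ)) with hNdef
  have hNu : IsUnit N.det := (Matrix.isUnit_iff_isUnit_det _).1 hN.isUnit
  have hMu : IsUnit (K + lam • (1 : Matrix (Fin n) (Fin n) ℝ)).det :=
    (Matrix.isUnit_iff_isUnit_det _).1 hM.isUnit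
  let y : {j : Fin n // j ≠ i} → ℝ := fun b => Y b.val k
  let w : {j : Fin n // j ≠ i} → ℝ := N⁻¹ *ᵥ y
  let v : Fin n → ℝ := fun j => if h : j ≠ i then w ⟨j, h⟩ else 0
  have hvi : v i = 0 := by simp [v]
  have hva : ∀ a : {j : Fin n // j ≠ i}, v a.val = w a := fun a => by
    have h := a.2
    simp [v, h]
  have hNw : N *ᵥ w = y := by
    simp only [w, Matrix.mulVec_mulVec, Matrix.mul_nonsing_inv _ hNu, Matrix.one_mulVec]
  have hKv : ∀ j, (K *ᵥ v) j = ∑ a : {j : Fin n // j ≠ i}, K j a.val * w a := fun j => by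
    rw [Matrix.mulVec, dotProduct, Fintype.sum_eq_add_sum_subtype_ne _ i, hvi, mul_zero, zero_add]
    exact Finset.sum_congr rfl fun a _ => by rw [hva]
  have hKi : (K *ᵥ v) i = f k := by
    rw [hKv, hfk]
    refine Finset.sum_congr rfl fun a _ => ?_
    simp only [w, y, Matrix.mulVec, dotProduct, Finset.mul_sum, mul_assoc]
  have hmain : (K + lam • (1 : Matrix (Fin n) (Fin n) ℝ)) *ᵥ v = fun j => Ytil j k := by
    funext j
    rw [Matrix.add_mulVec, Matrix.smul_mulVec, Matrix.one_mulVec, Pi.add_apply, Pi.smul_apply,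
      hYtil]
    by_cases h : j = i
    · subst h
      rw [hKi, hvi]; simp
    · rw [if_neg h, hKv]
      have h1 := congrFun hNw ⟨j, h⟩
      rw [hNdef, Matrix.add_mulVec, Matrix.smul_mulVec, Matrix.one_mulVec, Pi.add_apply,
        Pi.smul_apply, ← hva] at h1
      exact h1
  have e : (A * Ytil) i k = (A *ᵥ fun j => Ytil j k) i := rfl
  rw [e, ← hmain, hA, Matrix.mulVec_mulVec, Matrix.mul_assoc, Matrix.nonsing_inv_mul _ hMu,
    Matrix.mul_one, hKi, hYtil, if_pos rfl]
end

section
/- Let K = V diag(ω) Vᵀ with V ∈ ℝ^{n×n} orthogonal, ω_j > 0 for j ≤ r and ω_j = 0 for j > r with r < n, and let Y ∈ ℝ^{n×C}. Fix i with Σ_{j=r+1}^n V_{ij}² > 0. Then as λ → 0⁺ the leave-one-out residual Δ^λ_{ik} = (Y_{ik} − (K(K+λI)⁻¹Y)_{ik})/(1 − (K(K+λI)⁻¹)_{ii}) converges, for each k, to Δ_{ik} = Σ_{l=1}^n Y_{lk} · (Σ_{j=r+1}^n V_{ij}V_{lj}) / (Σ_{j=r+1}^n V_{ij}²). -/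
open Matrix Finset Filter

/-- **Zero-regularization limit of the leave-one-out residual, rank-deficient case.**
For `K = V diag(ω) Vᵀ` of rank `r < n` (`V` orthogonal), targets `Y`, and an index
`i` with `∑_{j ≥ r} V i j ² > 0`, the ridge leave-one-out residual
`Δ lam i k = (Y i k - (K(K+lam I)⁻¹Y) i k)/(1 - (K(K+lam I)⁻¹) i i)` converges, as
`lam → 0⁺`, to `∑ l, Y l k (∑_{j ≥ r} V i j V l j)/(∑_{j ≥ r} V i j ²)`. -/
theorem loo_residual_zero_reg_limit_rank_deficient
    (n r C : ℕ) (hr : r < n)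
    (V : Matrix (Fin n) (Fin n) ℝ) (hV : V ∈ Matrix.orthogonalGroup (Fin n) ℝ)
    (ω : Fin n → ℝ)
    (hω_pos : ∀ j : Fin n, (j : ℕ) < r → 0 < ω j)
    (hω_zero : ∀ j : Fin n, r ≤ (j : ℕ) → ω j = 0)
    (Y : Matrix (Fin n) (Fin C) ℝ)
    (K : Matrix (Fin n) (Fin n) ℝ) (hK : K = V * Matrix.diagonal ω * Vᵀ)
    (i : Fin n)
    (hi : 0 < ∑ j ∈ Finset.univ.filter (fun j : Fin n => r ≤ (j : ℕ)), V i j ^ 2)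
    (Δ : ℝ → Fin n → Fin C → ℝ)
    (hΔ : ∀ (lam : ℝ) (i : Fin n) (k : Fin C),
      Δ lam i k =
        (Y i k - (K * (K + lam • (1 : Matrix (Fin n) (Fin n) ℝ))⁻¹ * Y) i k) /
          (1 - (K * (K + lam • (1 : Matrix (Fin n) (Fin n) ℝ))⁻¹) i i)) :
    ∀ k : Fin C,
      Tendsto (fun lam : ℝ => Δ lam i k) (nhdsWithin 0 (Set.Ioi 0))
        (nhds (∑ l : Fin n, Y l k *
          ((∑ j ∈ Finset.univ.filter (fun j : Fin n => r ≤ (j : ℕ)), V i j * V l j) /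
            (∑ j ∈ Finset.univ.filter (fun j : Fin n => r ≤ (j : ℕ)), V i j ^ 2)))) := by
  intro k
  have hVV : V * Vᵀ = 1 := by
    have := (Matrix.mem_orthogonalGroup_iff (Fin n) ℝ).1 hV
    simpa [Matrix.star_eq_conjTranspose] using this
  have hVV' : Vᵀ * V = 1 := mul_eq_one_comm.1 hVV
  have hω : ∀ j, 0 ≤ ω j := fun j => by
    rcases lt_or_ge (j : ℕ) r with h | h
    · exact (hω_pos j h).le
    · exact (hω_zero j h).ge
  let B : ℝ → Matrix (Fin n) (Fin n) ℝ := fun lam =>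
    V * Matrix.diagonal (fun j => lam / (ω j + lam)) * Vᵀ
  have hB : ∀ lam : ℝ, 0 < lam →
      K * (K + lam • (1 : Matrix (Fin n) (Fin n) ℝ))⁻¹ = 1 - B lam := by
    intro lam hlam
    have hne : ∀ j, ω j + lam ≠ 0 := fun j => by have := hω j; positivity
    have h1 : K + lam • (1 : Matrix (Fin n) (Fin n) ℝ)
        = V * Matrix.diagonal (fun j => ω j + lam) * Vᵀ := by
      have : Matrix.diagonal (fun j => ω j + lam)
          = Matrix.diagonal ω + lam • (1 : Matrix (Fin n) (Fin n) ℝ) := by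
        ext a b
        by_cases hab : a = b
        · subst hab; simp
        · simp [hab]
      rw [this, hK, Matrix.mul_add, Matrix.add_mul, Matrix.mul_smul, Matrix.smul_mul,
        Matrix.mul_one, hVV]
    have hmul : ∀ d e : Fin n → ℝ, (V * Matrix.diagonal d * Vᵀ) * (V * Matrix.diagonal e * Vᵀ)
        = V * Matrix.diagonal (fun j => d j * e j) * Vᵀ := by
      intro d e
      calc _ = V * Matrix.diagonal d * (Vᵀ * V) * Matrix.diagonal e * Vᵀ := by
            simp only [Matrix.mul_assoc]
        _ = _ := by
            rw [hVV', Matrix.mul_one, Matrix.mul_assoc V, Matrix.diagonal_mul_diagonal]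
    have h2 : (K + lam • (1 : Matrix (Fin n) (Fin n) ℝ))⁻¹
        = V * Matrix.diagonal (fun j => (ω j + lam)⁻¹) * Vᵀ := by
      apply Matrix.inv_eq_right_inv
      rw [h1, hmul]
      simp [hne, hVV]
    rw [h2, eq_sub_iff_add_eq, hK, hmul, ← Matrix.add_mul, ← Matrix.mul_add,
      Matrix.diagonal_add]
    have : (fun j => ω j * (ω j + lam)⁻¹ + lam / (ω j + lam)) = fun _ => (1 : ℝ) := by
      funext j
      have := hne j
      field_simp
    rw [this]
    simp [hVV]
  have hBt : ∀ a b, Tendsto (fun lam => B lam a b) (nhdsWithin 0 (Set.Ioi 0))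
      (nhds (∑ j ∈ Finset.univ.filter (fun j : Fin n => r ≤ (j : ℕ)), V a j * V b j)) := by
    intro a b
    have e : ∀ lam, B lam a b = ∑ j, V a j * (lam / (ω j + lam)) * V b j := by
      intro lam
      simp only [B]
      rw [Matrix.mul_apply]
      simp only [Matrix.mul_diagonal, Matrix.transpose_apply]
    simp only [e]
    rw [Finset.sum_filter]
    refine tendsto_finsetSum _ fun j _ => ?_
    split_ifs with h
    · refine tendsto_const_nhds.congr' ?_
      filter_upwards [self_mem_nhdsWithin] with lam hlam
      have : lam ≠ 0 := ne_of_gt hlam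
      simp [hω_zero j h, this]
    · have hp := hω_pos j (not_le.1 h)
      have hc : ContinuousAt (fun lam : ℝ => V a j * (lam / (ω j + lam)) * V b j) 0 := by
        have : ω j + 0 ≠ 0 := by simpa using hp.ne'
        fun_prop (disch := assumption)
      have := hc.tendsto.mono_left (nhdsWithin_le_nhds (s := Set.Ioi 0))
      simpa using this
  have hnum : Tendsto (fun lam => ∑ l, B lam i l * Y l k) (nhdsWithin 0 (Set.Ioi 0))
      (nhds (∑ l, (∑ j ∈ Finset.univ.filter (fun j : Fin n => r ≤ (j : ℕ)), V i j * V l j)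
        * Y l k)) :=
    tendsto_finsetSum _ fun l _ => (hBt i l).mul_const _
  have hden := hBt i i
  simp only [← pow_two] at hden
  have hq := hnum.div hden hi.ne'
  have hlim : (∑ l : Fin n, Y l k *
          ((∑ j ∈ Finset.univ.filter (fun j : Fin n => r ≤ (j : ℕ)), V i j * V l j) /
            (∑ j ∈ Finset.univ.filter (fun j : Fin n => r ≤ (j : ℕ)), V i j ^ 2)))
      = (∑ l, (∑ j ∈ Finset.univ.filter (fun j : Fin n => r ≤ (j : ℕ)), V i j * V l j)
        * Y l k) / (∑ j ∈ Finset.univ.filter (fun j : Fin n => r ≤ (j : ℕ)), V i j ^ 2) := by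
    rw [Finset.sum_div]
    exact Finset.sum_congr rfl fun l _ => by ring
  rw [hlim]
  refine hq.congr' ?_
  filter_upwards [self_mem_nhdsWithin] with lam hlam
  rw [hΔ, hB lam hlam, Matrix.sub_mul, Matrix.one_mul]
  simp [Matrix.mul_apply (M := B lam)]
end

section
/- Let K = V diag(ω) Vᵀ with V ∈ ℝ^{n×n} orthogonal and all eigenvalues ω_j > 0 (so K has full rank n), and let Y ∈ ℝ^{n×C}. Then for every i and k, as λ → 0⁺ the leave-one-out residual Δ^λ_{ik} = (Y_{ik} − (K(K+λI)⁻¹Y)_{ik})/(1 − (K(K+λI)⁻¹)_{ii}) converges to Δ_{ik} = Σ_{l=1}^n Y_{lk} · (Σ_{j=1}^n (1/ω_j) V_{ij}V_{lj}) / (Σ_{j=1}^n (1/ω_j) V_{ij}²), and the denominator Σ_{j=1}^n (1/ω_j)V_{ij}² is strictly positive. -/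
open Matrix Finset Filter

/-- **Zero-regularization limit of the leave-one-out residual, full-rank case.**
For `K = V diag(ω) Vᵀ` with `V` orthogonal and all eigenvalues `ω j > 0`
(full rank) and targets `Y`, the denominator `∑ j (1/ω j) V i j ²` is strictly
positive and the ridge leave-one-out residual converges, as `lam → 0⁺`, to
`∑ l, Y l k (∑ j (1/ω j) V i j V l j)/(∑ j (1/ω j) V i j ²)`. -/
theorem loo_residual_zero_reg_limit_full_rank
    (n C : ℕ)
    (V : Matrix (Fin n) (Fin n) ℝ) (hV : V ∈ Matrix.orthogonalGroup (Fin n) ℝ)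
    (ω : Fin n → ℝ) (hω : ∀ j : Fin n, 0 < ω j)
    (Y : Matrix (Fin n) (Fin C) ℝ)
    (K : Matrix (Fin n) (Fin n) ℝ) (hK : K = V * Matrix.diagonal ω * Vᵀ)
    (Δ : ℝ → Fin n → Fin C → ℝ)
    (hΔ : ∀ (lam : ℝ) (i : Fin n) (k : Fin C),
      Δ lam i k =
        (Y i k - (K * (K + lam • (1 : Matrix (Fin n) (Fin n) ℝ))⁻¹ * Y) i k) /
          (1 - (K * (K + lam • (1 : Matrix (Fin n) (Fin n) ℝ))⁻¹) i i)) :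
    ∀ (i : Fin n) (k : Fin C),
      (0 < ∑ j : Fin n, (1 / ω j) * V i j ^ 2) ∧
      Tendsto (fun lam : ℝ => Δ lam i k) (nhdsWithin 0 (Set.Ioi 0))
        (nhds (∑ l : Fin n, Y l k *
          ((∑ j : Fin n, (1 / ω j) * (V i j * V l j)) /
            (∑ j : Fin n, (1 / ω j) * V i j ^ 2)))) := by
  have hVV : V * Vᵀ = 1 := (Matrix.mem_orthogonalGroup_iff (Fin n) ℝ).1 hV
  have hVV' : Vᵀ * V = 1 := (Matrix.mem_orthogonalGroup_iff' (Fin n) ℝ).1 hV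
  intro i k
  have hpos : 0 < ∑ j : Fin n, (1 / ω j) * V i j ^ 2 := by
    have h1 : ∑ j : Fin n, V i j ^ 2 = 1 := by
      have h := congrFun (congrFun hVV i) i
      simp only [Matrix.mul_apply, Matrix.transpose_apply, Matrix.one_apply_eq] at h
      simpa [sq] using h
    have hnn : ∀ j : Fin n, 0 ≤ (1 / ω j) * V i j ^ 2 := fun j =>
      mul_nonneg (one_div_pos.2 (hω j)).le (sq_nonneg _)
    refine lt_of_le_of_ne (Finset.sum_nonneg fun j _ => hnn j) fun h0 => ?_
    have hz := (Finset.sum_eq_zero_iff_of_nonneg fun j _ => hnn j).1 h0.symm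
    have : ∑ j : Fin n, V i j ^ 2 = 0 := Finset.sum_eq_zero fun j hj =>
      (mul_eq_zero.1 (hz j hj)).resolve_left (one_div_pos.2 (hω j)).ne'
    linarith
  refine ⟨hpos, ?_⟩
  have key : ∀ lam : ℝ, 0 < lam → K * (K + lam • (1 : Matrix (Fin n) (Fin n) ℝ))⁻¹ =
      1 - lam • (V * Matrix.diagonal (fun j => 1 / (ω j + lam)) * Vᵀ) := by
    intro lam hl
    have e : K + lam • (1 : Matrix (Fin n) (Fin n) ℝ) =
        V * Matrix.diagonal (fun j => ω j + lam) * Vᵀ := by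
      have : Matrix.diagonal (fun j => ω j + lam) =
          Matrix.diagonal ω + lam • (1 : Matrix (Fin n) (Fin n) ℝ) := by
        rw [Matrix.smul_one_eq_diagonal, Matrix.diagonal_add]
      rw [this, Matrix.mul_add, Matrix.add_mul, hK]
      simp [hVV]
    have hinv : (K + lam • (1 : Matrix (Fin n) (Fin n) ℝ)) *
        (V * Matrix.diagonal (fun j => 1 / (ω j + lam)) * Vᵀ) = 1 := by
      have hd : Matrix.diagonal (fun j => ω j + lam) *
          Matrix.diagonal (fun j => 1 / (ω j + lam)) = 1 := by
        rw [Matrix.diagonal_mul_diagonal, ← Matrix.diagonal_one]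
        congr 1
        funext j
        exact mul_one_div_cancel (add_pos (hω j) hl).ne'
      rw [e]
      calc _ = V * (Matrix.diagonal (fun j => ω j + lam) * (Vᵀ * V) *
          Matrix.diagonal (fun j => 1 / (ω j + lam))) * Vᵀ := by
            simp only [Matrix.mul_assoc]
        _ = 1 := by rw [hVV', Matrix.mul_one, hd, Matrix.mul_one, hVV]
    rw [Matrix.inv_eq_right_inv hinv, eq_sub_iff_add_eq, ← hinv, Matrix.add_mul]
    simp
  have hG : ∀ (lam : ℝ) (l : Fin n),
      (V * Matrix.diagonal (fun j => 1 / (ω j + lam)) * Vᵀ) i l =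
        ∑ j : Fin n, (1 / (ω j + lam)) * (V i j * V l j) := by
    intro lam l
    rw [Matrix.mul_apply]
    refine Finset.sum_congr rfl fun j _ => ?_
    rw [Matrix.mul_diagonal, Matrix.transpose_apply]
    ring
  have hT : ∀ l : Fin n, Tendsto (fun lam : ℝ =>
      ∑ j : Fin n, (1 / (ω j + lam)) * (V i j * V l j)) (nhdsWithin 0 (Set.Ioi 0))
      (nhds (∑ j : Fin n, (1 / ω j) * (V i j * V l j))) := by
    intro l
    refine tendsto_finsetSum _ fun j _ => Tendsto.mul_const _ ?_
    have hc : ContinuousAt (fun lam : ℝ => 1 / (ω j + lam)) 0 := by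
      refine ContinuousAt.div (by fun_prop) (by fun_prop) ?_
      simpa using (hω j).ne'
    have := hc.tendsto
    simp only [add_zero] at this
    exact this.mono_left nhdsWithin_le_nhds
  have hlim : Tendsto (fun lam : ℝ => ∑ l : Fin n, Y l k *
      ((∑ j : Fin n, (1 / (ω j + lam)) * (V i j * V l j)) /
        (∑ j : Fin n, (1 / (ω j + lam)) * (V i j * V i j)))) (nhdsWithin 0 (Set.Ioi 0))
      (nhds (∑ l : Fin n, Y l k *
          ((∑ j : Fin n, (1 / ω j) * (V i j * V l j)) /
            (∑ j : Fin n, (1 / ω j) * V i j ^ 2)))) := by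
    simp only [sq] at hpos ⊢
    exact tendsto_finsetSum _ fun l _ => ((hT l).div (hT i) hpos.ne').const_mul _
  refine hlim.congr' ?_
  filter_upwards [self_mem_nhdsWithin] with lam hl
  have hl' : 0 < lam := hl
  rw [hΔ, key lam hl', Matrix.sub_mul, Matrix.one_mul, Matrix.smul_mul, Matrix.sub_apply,
    Matrix.sub_apply, Matrix.one_apply_eq, sub_sub_cancel, sub_sub_cancel, Matrix.smul_apply,
    Matrix.smul_apply, smul_eq_mul, smul_eq_mul, mul_div_mul_left _ _ hl'.ne', Matrix.mul_apply,
    Finset.sum_div]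
  refine Finset.sum_congr rfl fun l _ => ?_
  rw [hG, hG]
  ring
end

section
/- Fix an orthogonal matrix V ∈ ℝ^{n×n}, targets Y ∈ ℝ^{n×C}, an index i with V_{in} ≠ 0, a coordinate k, and strictly positive eigenvalues ω_1,…,ω_{n−1} > 0. For ω_n > 0 define Δ_{ik}(n) = Σ_{l=1}^n Y_{lk} (Σ_{j=1}^n (1/ω_j)V_{ij}V_{lj}) / (Σ_{j=1}^n (1/ω_j)V_{ij}²) (the full-rank zero-regularization leave-one-out residual for K = V diag(ω)Vᵀ), and define Δ_{ik}(n−1) = Σ_{l=1}^n Y_{lk} V_{in}V_{ln} / V_{in}² (the rank-(n−1) zero-regularization residual). Then Δ_{ik}(n) → Δ_{ik}(n−1) as ω_n → 0⁺; i.e., the apparent phase transition between rank n−1 and rank n is a smooth interpolation when the smallest eigenvalue tends to zero. -/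
open Matrix Finset Filter

theorem loo_aux {n : ℕ} (i₀ : Fin n) (ω f : Fin n → ℝ) :
    Tendsto (fun t : ℝ => t * ∑ j : Fin n, (1 / Function.update ω i₀ t j) * f j)
      (nhdsWithin 0 (Set.Ioi 0)) (nhds (f i₀)) := by
  have h : Tendsto (fun t : ℝ => f i₀ + t * ∑ j ∈ univ.erase i₀, (1 / ω j) * f j)
      (nhdsWithin 0 (Set.Ioi 0)) (nhds (f i₀)) := by
    have hc : Continuous (fun t : ℝ => f i₀ + t * ∑ j ∈ univ.erase i₀, (1 / ω j) * f j) := by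
      fun_prop
    have h0 := hc.tendsto 0
    simp only [zero_mul, add_zero] at h0
    exact h0.mono_left nhdsWithin_le_nhds
  refine h.congr' ?_
  filter_upwards [self_mem_nhdsWithin] with t ht
  have ht' : t ≠ 0 := ne_of_gt ht
  rw [← Finset.add_sum_erase univ _ (Finset.mem_univ i₀), Function.update_self, mul_add]
  congr 1
  · field_simp
  · congr 1
    refine Finset.sum_congr rfl fun j hj => ?_
    rw [Function.update_of_ne (Finset.ne_of_mem_erase hj)]

/-- **Smooth interpolation between the full-rank and rank-(n−1) leave-one-out residuals.**
Fix an orthogonal `V`, targets `Y`, the last index `i₀` (`(i₀ : ℕ) = n - 1`), an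
index `i` with `V i i₀ ≠ 0`, a coordinate `k`, and eigenvalues `ω j > 0` for
`j ≠ i₀`. Letting the smallest eigenvalue `t = ω_n` tend to `0⁺`, the full-rank
zero-regularization residual
`Δ(n) = ∑ l Y l k (∑ j (1/ω'_j) V i j V l j)/(∑ j (1/ω'_j) V i j ²)`
(with `ω' = ω` except `ω' i₀ = t`) converges to the rank-(n−1) residual
`Δ(n−1) = ∑ l Y l k (V i i₀ V l i₀)/(V i i₀ ²)`. -/
theorem loo_residual_rank_phase_transition_smooth
    (n C : ℕ) (hn : 1 ≤ n)
    (i₀ : Fin n) (hi₀ : (i₀ : ℕ) = n - 1)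
    (V : Matrix (Fin n) (Fin n) ℝ) (hV : V ∈ Matrix.orthogonalGroup (Fin n) ℝ)
    (Y : Matrix (Fin n) (Fin C) ℝ)
    (i : Fin n) (hi : V i i₀ ≠ 0) (k : Fin C)
    (ω : Fin n → ℝ) (hω : ∀ j : Fin n, j ≠ i₀ → 0 < ω j) :
    Tendsto
      (fun t : ℝ =>
        ∑ l : Fin n, Y l k *
          ((∑ j : Fin n, (1 / Function.update ω i₀ t j) * (V i j * V l j)) /
            (∑ j : Fin n, (1 / Function.update ω i₀ t j) * V i j ^ 2)))
      (nhdsWithin 0 (Set.Ioi 0))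
      (nhds (∑ l : Fin n, Y l k * (V i i₀ * V l i₀) / V i i₀ ^ 2)) := by
  refine tendsto_finsetSum _ fun l _ => ?_
  rw [mul_div_assoc]
  refine Tendsto.const_mul _ ?_
  have h := (loo_aux i₀ ω (fun j => V i j * V l j)).div
    (loo_aux i₀ ω (fun j => V i j ^ 2)) (pow_ne_zero 2 hi)
  refine h.congr' ?_
  filter_upwards [self_mem_nhdsWithin] with t ht
  have ht' : t ≠ 0 := ne_of_gt ht
  exact mul_div_mul_left _ _ ht'
end

section
/- Let n ≥ 1, C ≥ 1, let K be a symmetric positive semidefinite real n×n matrix, λ > 0, A = K(K + λI_n)⁻¹, and let Y, Ỹ ∈ ℝ^{n×C} be the clean and noisy target matrices. For each i with A_{ii} ≠ 1, let f̃^{-i}(x_i) ∈ ℝ^C be the leave-one-out prediction of the model trained on the noisy targets, with k-th component (k^{(i)})ᵀ(K^{(i)} + λI_{n-1})⁻¹Ỹ^{(i)}_{•k}, and let Δ̃^λ_{ik} = (Ỹ_{ik} − (AỸ)_{ik})/(1 − A_{ii}). Then the residual of this model against the clean label satisfies Y_{ik} − f̃^{-i}_k(x_i) = (Y_{ik} −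 Ỹ_{ik}) + Δ̃^λ_{ik} for all k; consequently the leave-one-out loss of the model trained on Ỹ but evaluated on Y equals (1/n) Σ_{i=1}^n Σ_{k=1}^C (Δ̃^λ_{ik} + Y_{ik} − Ỹ_{ik})². -/
open Matrix Finset

theorem isUnit_det_ridge {m : Type*} [Fintype m] [DecidableEq m] (K : Matrix m m ℝ)
    (hK : K.PosSemidef) (lam : ℝ) (hlam : 0 < lam) :
    IsUnit (K + lam • (1 : Matrix m m ℝ)).det := by
  have h1 : (lam • (1 : Matrix m m ℝ)).PosDef := Matrix.PosDef.one.smul hlam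
  have h2 : (K + lam • (1 : Matrix m m ℝ)).PosDef := Matrix.PosDef.posSemidef_add hK h1
  exact isUnit_iff_ne_zero.mpr h2.det_pos.ne'

theorem sum_ne_of_zero {n : ℕ} (i : Fin n) (g : Fin n → ℝ) (h : g i = 0) :
    ∑ a : {j : Fin n // j ≠ i}, g a.val = ∑ j, g j := by
  rw [← Fintype.sum_subtype_add_sum_subtype (fun j => j ≠ i) g]
  have : ∑ a : {j : Fin n // ¬ j ≠ i}, g a.val = 0 := by
    apply Finset.sum_eq_zero
    rintro ⟨a, ha⟩ _
    have : a = i := not_not.mp ha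
    simp [this, h]
  rw [this, add_zero]

theorem loo_core {n : ℕ} (K : Matrix (Fin n) (Fin n) ℝ) (hK : K.PosSemidef)
    (lam : ℝ) (hlam : 0 < lam) (y : Fin n → ℝ) (i : Fin n)
    (B : Matrix (Fin n) (Fin n) ℝ)
    (hB : B = (K + lam • (1 : Matrix (Fin n) (Fin n) ℝ))⁻¹) (hd : B i i ≠ 0) :
    ∑ a : {j : Fin n // j ≠ i}, ∑ b : {j : Fin n // j ≠ i},
        K i a.val *
          ((K.submatrix (fun a : {j : Fin n // j ≠ i} => a.val)
              (fun b : {j : Fin n // j ≠ i} => b.val)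
            + lam • (1 : Matrix {j : Fin n // j ≠ i} {j : Fin n // j ≠ i} ℝ))⁻¹ a b) *
          y b.val = y i - (B *ᵥ y) i / B i i := by
  have hMB : (K + lam • (1 : Matrix (Fin n) (Fin n) ℝ)) * B = 1 := by
    rw [hB]; exact Matrix.mul_nonsing_inv _ (isUnit_det_ridge K hK lam hlam)
  set t := (B *ᵥ y) i / B i i with ht
  set v : Fin n → ℝ := B *ᵥ (y - t • Pi.single i 1) with hv
  have hvi : v i = 0 := by
    simp only [hv, Matrix.mulVec_sub, Matrix.mulVec_smul, Pi.sub_apply, Pi.smul_apply,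
      Matrix.mulVec_single_one, Matrix.col_apply, smul_eq_mul, ht]
    field_simp
    ring
  have hMv : (K + lam • (1 : Matrix (Fin n) (Fin n) ℝ)) *ᵥ v = y - t • Pi.single i 1 := by
    rw [hv, Matrix.mulVec_mulVec, hMB, Matrix.one_mulVec]
  have hKv : ∀ j, ∑ a : {j : Fin n // j ≠ i}, K j a.val * v a.val + lam * v j
      = y j - t * (Pi.single i 1 : Fin n → ℝ) j := by
    intro j
    rw [sum_ne_of_zero i (fun a => K j a * v a) (by simp [hvi])]
    have := congrFun hMv j
    rw [Matrix.add_mulVec, Matrix.smul_mulVec, Matrix.one_mulVec] at this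
    simpa [Matrix.mulVec, dotProduct] using this
  set N := K.submatrix (fun a : {j : Fin n // j ≠ i} => a.val)
              (fun b : {j : Fin n // j ≠ i} => b.val)
            + lam • (1 : Matrix {j : Fin n // j ≠ i} {j : Fin n // j ≠ i} ℝ) with hN
  have hNu : IsUnit N.det := isUnit_det_ridge _ (hK.submatrix _) lam hlam
  have hNv : N *ᵥ (fun a => v a.val) = fun a => y a.val := by
    ext a
    rw [hN, Matrix.add_mulVec, Matrix.smul_mulVec, Matrix.one_mulVec]
    have := hKv a.val
    rw [Pi.single_eq_of_ne a.2] at this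
    simpa [Matrix.mulVec, dotProduct] using this
  have hinv : N⁻¹ *ᵥ (fun a => y a.val) = fun a => v a.val := by
    rw [← hNv, Matrix.mulVec_mulVec, Matrix.nonsing_inv_mul _ hNu, Matrix.one_mulVec]
  have h3 : ∀ a : {j : Fin n // j ≠ i}, ∑ b : {j : Fin n // j ≠ i},
      K i a.val * (N⁻¹ a b) * y b.val = K i a.val * v a.val := by
    intro a
    have := congrFun hinv a
    simp only [Matrix.mulVec, dotProduct] at this
    simp only [mul_assoc]
    rw [← Finset.mul_sum, this]
  rw [Finset.sum_congr rfl (fun a _ => h3 a)]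
  have := hKv i
  rw [hvi, Pi.single_eq_same] at this
  linarith

/-- **Leave-one-out loss for a model trained on noisy targets and evaluated on clean ones.**
With smoother `A = K (K + lam I)⁻¹`, noisy targets `Ỹ`, leave-one-out predictions
`f̃ i k = (k⁽ⁱ⁾)ᵀ (K⁽ⁱ⁾ + lam I)⁻¹ Ỹ⁽ⁱ⁾_{•k}` and residuals
`Δ̃ i k = (Ỹ i k - (A Ỹ) i k)/(1 - A i i)`, the residual against the clean label
satisfies `Y i k - f̃ i k = (Y i k - Ỹ i k) + Δ̃ i k`, hence the LOO loss of the
model trained on `Ỹ` but evaluated on `Y` equals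
`(1/n) ∑ i ∑ k (Δ̃ i k + Y i k - Ỹ i k)²`. -/
theorem loo_loss_noisy_labels
    (n C : ℕ) (hn : 1 ≤ n) (hC : 1 ≤ C)
    (K : Matrix (Fin n) (Fin n) ℝ) (hK : K.PosSemidef)
    (lam : ℝ) (hlam : 0 < lam)
    (Y Ytil : Matrix (Fin n) (Fin C) ℝ)
    (A : Matrix (Fin n) (Fin n) ℝ)
    (hA : A = K * (K + lam • (1 : Matrix (Fin n) (Fin n) ℝ))⁻¹)
    (ftil : Fin n → Fin C → ℝ)
    (hftil : ∀ (i : Fin n) (k : Fin C),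
      ftil i k = ∑ a : {j : Fin n // j ≠ i}, ∑ b : {j : Fin n // j ≠ i},
        K i a.val *
          ((K.submatrix (fun a : {j : Fin n // j ≠ i} => a.val)
              (fun b : {j : Fin n // j ≠ i} => b.val)
            + lam • (1 : Matrix {j : Fin n // j ≠ i} {j : Fin n // j ≠ i} ℝ))⁻¹ a b) *
          Ytil b.val k)
    (Δtil : Fin n → Fin C → ℝ)
    (hΔtil : ∀ (i : Fin n) (k : Fin C),
      Δtil i k = (Ytil i k - (A * Ytil) i k) / (1 - A i i)) :
    (∀ i : Fin n, A i i ≠ 1 → ∀ k : Fin C,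
        Y i k - ftil i k = (Y i k - Ytil i k) + Δtil i k) ∧
    ((∀ i : Fin n, A i i ≠ 1) →
      (1 / (n : ℝ)) * ∑ i : Fin n, ∑ k : Fin C, (Y i k - ftil i k) ^ 2 =
      (1 / (n : ℝ)) * ∑ i : Fin n, ∑ k : Fin C,
        (Δtil i k + Y i k - Ytil i k) ^ 2) := by
  have hu := isUnit_det_ridge K hK lam hlam
  have key : ∀ i : Fin n, A i i ≠ 1 → ∀ k : Fin C,
        Y i k - ftil i k = (Y i k - Ytil i k) + Δtil i k := by
    intro i hi k
    set B := (K + lam • (1 : Matrix (Fin n) (Fin n) ℝ))⁻¹ with hB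
    have hAB : A = 1 - lam • B := by
      have h1 : (K + lam • (1 : Matrix (Fin n) (Fin n) ℝ)) * B = 1 :=
        Matrix.mul_nonsing_inv _ hu
      rw [add_mul, Matrix.smul_mul, one_mul] at h1
      rw [hA, ← h1, add_sub_cancel_right]
    have hAii : A i i = 1 - lam * B i i := by simp [hAB]
    have hd : B i i ≠ 0 := by
      intro h
      exact hi (by rw [hAii, h]; ring)
    have hAY : (A * Ytil) i k = Ytil i k - lam * (B *ᵥ (fun j => Ytil j k)) i := by
      rw [hAB, Matrix.sub_mul, Matrix.one_mul, Matrix.smul_mul]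
      simp [Matrix.mul_apply, Matrix.mulVec, dotProduct]
    rw [hΔtil, hftil, loo_core K hK lam hlam (fun j => Ytil j k) i B hB hd, hAY, hAii]
    have hl := hlam.ne'
    have e : (Ytil i k - (Ytil i k - lam * (B *ᵥ (fun j => Ytil j k)) i)) /
        (1 - (1 - lam * B i i)) = (B *ᵥ (fun j => Ytil j k)) i / B i i := by
      rw [sub_sub_cancel, sub_sub_cancel, mul_div_mul_left _ _ hl]
    rw [e]
    ring
  refine ⟨key, fun h => ?_⟩
  congr 1
  refine Finset.sum_congr rfl fun i _ => Finset.sum_congr rfl fun k _ => ?_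
  rw [key i (h i) k]
  ring
end

section
/- Let V ∈ ℝ^{n×n} be orthogonal with V_{in} ≠ 0 for all i, let ω_1,…,ω_{n−1} > 0 and ω_n = 0, set K = V diag(ω)Vᵀ (so rank(K) = n − 1), and let y ∈ ℝ^n. Then the zero-regularization leave-one-out loss at the interpolation threshold satisfies (1/n) Σ_{i=1}^n Δ_i² = (1/n) · (Σ_{l=1}^n y_l V_{ln})² · Σ_{i=1}^n 1/V_{in}², where Δ_i = Σ_{l=1}^n y_l V_{in}V_{ln}/V_{in}² is the rank-(n−1) zero-regularization leave-one-out residual. Moreover, if in addition y ∈ {−1,+1}^n, then (1/n) Σ_{i=1}^n Δ_i² ≥ n (Σ_{l=1}^n y_l V_{ln})². -/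
open Matrix Finset

/-- **Leave-one-out loss at the interpolation threshold.**
For `K = V diag(ω) Vᵀ` of rank `n − 1` (`V` orthogonal, null eigenvector the last
column `i₀` of `V`, with `V i i₀ ≠ 0` for all `i`) and targets `y`, the
zero-regularization leave-one-out residuals
`Δ i = ∑ l y l (V i i₀ V l i₀)/(V i i₀ ²)` satisfy
`(1/n) ∑ Δ i ² = (1/n) (∑ l y l V l i₀)² ∑ i 1/(V i i₀)²`, and if moreover
`y ∈ {−1,+1}ⁿ` then `(1/n) ∑ Δ i ² ≥ n (∑ l y l V l i₀)²`. -/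
theorem loo_loss_interpolation_threshold
    (n : ℕ) (hn : 1 ≤ n)
    (i₀ : Fin n) (hi₀ : (i₀ : ℕ) = n - 1)
    (V : Matrix (Fin n) (Fin n) ℝ) (hV : V ∈ Matrix.orthogonalGroup (Fin n) ℝ)
    (hVz : ∀ i : Fin n, V i i₀ ≠ 0)
    (ω : Fin n → ℝ) (hω_pos : ∀ j : Fin n, j ≠ i₀ → 0 < ω j) (hω_zero : ω i₀ = 0)
    (K : Matrix (Fin n) (Fin n) ℝ) (hK : K = V * Matrix.diagonal ω * Vᵀ)
    (y : Fin n → ℝ)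
    (Δ : Fin n → ℝ)
    (hΔ : ∀ i : Fin n, Δ i = ∑ l : Fin n, y l * (V i i₀ * V l i₀) / V i i₀ ^ 2) :
    ((1 / (n : ℝ)) * ∑ i : Fin n, Δ i ^ 2 =
      (1 / (n : ℝ)) * (∑ l : Fin n, y l * V l i₀) ^ 2 * ∑ i : Fin n, 1 / V i i₀ ^ 2) ∧
    ((∀ l : Fin n, y l = 1 ∨ y l = -1) →
      (n : ℝ) * (∑ l : Fin n, y l * V l i₀) ^ 2 ≤ (1 / (n : ℝ)) * ∑ i : Fin n, Δ i ^ 2) := by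
  have hD : ∀ i : Fin n, Δ i ^ 2 = (∑ l : Fin n, y l * V l i₀) ^ 2 * (1 / V i i₀ ^ 2) := by
    intro i
    have h : Δ i = (∑ l : Fin n, y l * V l i₀) * (1 / V i i₀) := by
      rw [hΔ i, Finset.sum_mul]
      refine Finset.sum_congr rfl fun l _ => ?_
      have := hVz i
      field_simp
    rw [h, mul_pow, _root_.one_div_pow]
  have hE : (1 / (n : ℝ)) * ∑ i : Fin n, Δ i ^ 2 =
      (1 / (n : ℝ)) * (∑ l : Fin n, y l * V l i₀) ^ 2 * ∑ i : Fin n, 1 / V i i₀ ^ 2 := by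
    rw [Finset.sum_congr rfl fun i _ => hD i, ← Finset.mul_sum, mul_assoc]
  refine ⟨hE, fun _ => ?_⟩
  rw [hE]
  have hnorm : ∑ i : Fin n, V i i₀ ^ 2 = 1 := by
    have h := (Matrix.mem_orthogonalGroup_iff' (Fin n) ℝ).1 hV
    have h2 := congrFun (congrFun h i₀) i₀
    simp only [Matrix.mul_apply, Matrix.star_apply, star_trivial, Matrix.one_apply_eq] at h2
    simpa [pow_two] using h2
  have hn0 : (0 : ℝ) < n := by exact_mod_cast hn
  have hsum : (n : ℝ) ^ 2 ≤ ∑ i : Fin n, 1 / V i i₀ ^ 2 := by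
    have h1 : ∑ i : Fin n, (2 * (n : ℝ) - (n : ℝ) ^ 2 * V i i₀ ^ 2) ≤
        ∑ i : Fin n, 1 / V i i₀ ^ 2 := by
      refine Finset.sum_le_sum fun i _ => ?_
      have hp : 0 < V i i₀ ^ 2 := by have := hVz i; positivity
      rw [le_div_iff₀ hp]
      nlinarith [sq_nonneg ((n : ℝ) * V i i₀ ^ 2 - 1)]
    rw [Finset.sum_sub_distrib, ← Finset.mul_sum, ← Finset.mul_sum, hnorm] at h1
    simp only [Finset.sum_const, Finset.card_univ, Fintype.card_fin, nsmul_eq_mul] at h1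
    nlinarith
  calc (n : ℝ) * (∑ l : Fin n, y l * V l i₀) ^ 2
      = (1 / (n : ℝ)) * (∑ l : Fin n, y l * V l i₀) ^ 2 * (n : ℝ) ^ 2 := by field_simp
    _ ≤ _ := by gcongr
end

section
/- For each n ≥ 2 let v^{(n)} be distributed according to the uniform probability measure μ_n on the unit sphere S^{n−1} ⊂ ℝ^n, let y^{(n)} ∈ {−1,+1}^n be arbitrary fixed sign vectors, and define L_n(v) = (1/n)(Σ_{i=1}^n y^{(n)}_i v_i)² · Σ_{i=1}^n 1/v_i² (with the convention L_n(v) = +∞ if some v_i = 0). Then L_n diverges in probability: for every M > 0, μ_n{ v ∈ S^{n−1} : L_n(v) ≤ M } → 0 as n → ∞. (This is the rigorous content of the divergence of the zero-regularization leave-one-out loss at the interpolation threshold when the eigenvector matrix is Haar-distributed on the orthogonal group, since at rank n−1 the leave-one-out loss equals L_n evaluated at the last column of the eigenvector matrix, which is uniform on the sphere.) -/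
open MeasureTheory Finset Filter

/-- The image of a point of the unit sphere of `EuclideanSpace ℝ (Fin n)` under a
linear isometry equivalence (rotation/reflection), as a point of the sphere. -/
noncomputable def sphereRot {n : ℕ}
    (g : EuclideanSpace ℝ (Fin n) ≃ₗᵢ[ℝ] EuclideanSpace ℝ (Fin n))
    (v : Metric.sphere (0 : EuclideanSpace ℝ (Fin n)) 1) :
    Metric.sphere (0 : EuclideanSpace ℝ (Fin n)) 1 :=
  ⟨g v.val, by
    have hv := v.2
    simp only [Metric.mem_sphere, dist_zero_right] at hv ⊢
    rw [g.norm_map]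
    exact hv⟩

open ProbabilityTheory in
lemma loo_gauss_map {n : ℕ} (v : EuclideanSpace ℝ (Fin n)) (hv : ‖v‖ = 1) :
    (stdGaussian (EuclideanSpace ℝ (Fin n))).map (fun x => inner ℝ v x) = gaussianReal 0 1 := by
  have h := IsGaussian.map_eq_gaussianReal (μ := stdGaussian (EuclideanSpace ℝ (Fin n)))
    (innerSL ℝ v)
  rw [integral_strongDual_stdGaussian, variance_dual_stdGaussian, innerSL_apply_norm, hv] at h
  have e : (fun x => inner ℝ v x) = ⇑(innerSL ℝ v) := by ext x; simp
  rw [e, h]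
  simp

open ProbabilityTheory in
lemma loo_gauss_small (t : ℝ) : gaussianReal 0 1 {x : ℝ | |x| ≤ t} ≤ ENNReal.ofReal (2 * t) := by
  rw [gaussianReal_apply _ one_ne_zero]
  calc ∫⁻ x in {x : ℝ | |x| ≤ t}, gaussianPDF 0 1 x
      ≤ ∫⁻ x in {x : ℝ | |x| ≤ t}, 1 := by
        refine lintegral_mono fun x => ?_
        rw [gaussianPDF, gaussianPDFReal]
        refine ENNReal.ofReal_le_one.2 ?_
        have h1 : (√(2 * Real.pi * (1 : NNReal)))⁻¹ ≤ 1 := by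
          apply inv_le_one_of_one_le₀
          rw [Real.one_le_sqrt]
          have := Real.pi_gt_three
          push_cast
          linarith
        have h2 : Real.exp (-(x - 0) ^ 2 / (2 * (1 : NNReal))) ≤ 1 := by
          rw [Real.exp_le_one_iff]
          have := sq_nonneg (x - 0)
          push_cast
          linarith
        exact mul_le_one₀ h1 (Real.exp_nonneg _) h2
    _ = volume {x : ℝ | |x| ≤ t} := by simp
    _ = ENNReal.ofReal (2 * t) := by
        have : {x : ℝ | |x| ≤ t} = Set.Icc (-t) t := by ext x; simp [abs_le]
        rw [this, Real.volume_Icc]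
        congr 1; ring

open ProbabilityTheory in
lemma loo_gauss_norm (n : ℕ) :
    ∫⁻ x, ENNReal.ofReal (‖x‖ ^ 2) ∂(stdGaussian (EuclideanSpace ℝ (Fin n))) = n := by
  have h1 : ∀ i : Fin n, ∫⁻ x, ENNReal.ofReal (x i ^ 2)
      ∂(stdGaussian (EuclideanSpace ℝ (Fin n))) = 1 := by
    intro i
    have hm := loo_gauss_map (EuclideanSpace.single i (1 : ℝ)) (by simp)
    have e : (fun x : EuclideanSpace ℝ (Fin n) => inner ℝ (EuclideanSpace.single i (1 : ℝ)) x)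
        = fun x => x i := by ext x; simp [EuclideanSpace.inner_single_left]
    rw [e] at hm
    have hl : ∫⁻ x, ENNReal.ofReal (x i ^ 2) ∂(stdGaussian (EuclideanSpace ℝ (Fin n)))
        = ∫⁻ z, ENNReal.ofReal (z ^ 2) ∂(gaussianReal 0 1) := by
      rw [← hm, lintegral_map (by fun_prop) (by fun_prop)]
    rw [hl, ← ofReal_integral_eq_lintegral_ofReal]
    · have := variance_fun_id_gaussianReal (μ := 0) (v := 1)
      rw [variance_eq_integral (by fun_prop)] at this
      simp only [integral_id_gaussianReal, sub_zero] at this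
      rw [this]; simp
    · exact (memLp_id_gaussianReal 2).integrable_sq
    · exact ae_of_all _ fun z => sq_nonneg z
  calc ∫⁻ x, ENNReal.ofReal (‖x‖ ^ 2) ∂(stdGaussian (EuclideanSpace ℝ (Fin n)))
      = ∫⁻ x, ∑ i, ENNReal.ofReal (x i ^ 2) ∂(stdGaussian (EuclideanSpace ℝ (Fin n))) := by
        refine lintegral_congr fun x => ?_
        rw [EuclideanSpace.real_norm_sq_eq, ENNReal.ofReal_sum_of_nonneg]
        intro i _; positivity
    _ = n := by
        rw [lintegral_finsetSum _ (by intro i _; fun_prop)]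
        simp [h1]

open ProbabilityTheory in
lemma loo_gauss_bound {n : ℕ} (v : EuclideanSpace ℝ (Fin n)) (hv : ‖v‖ = 1)
    (ε R : ℝ) (hε : 0 ≤ ε) (hR : 0 < R) :
    stdGaussian (EuclideanSpace ℝ (Fin n)) {x | |inner ℝ x v| ≤ ε * ‖x‖} ≤
      ENNReal.ofReal (2 * (ε * R)) + ENNReal.ofReal (n / R ^ 2) := by
  have hsub : {x : EuclideanSpace ℝ (Fin n) | |inner ℝ x v| ≤ ε * ‖x‖} ⊆
      {x | |inner ℝ v x| ≤ ε * R} ∪ {x | ENNReal.ofReal (R ^ 2) ≤ ENNReal.ofReal (‖x‖ ^ 2)} := by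
    intro x hx
    simp only [Set.mem_setOf_eq] at hx
    rcases le_total ‖x‖ R with h | h
    · left
      simp only [Set.mem_setOf_eq]
      rw [real_inner_comm]
      exact hx.trans (mul_le_mul_of_nonneg_left h hε)
    · right
      exact ENNReal.ofReal_le_ofReal (pow_le_pow_left₀ hR.le h 2)
  refine (measure_mono hsub).trans ((measure_union_le _ _).trans (add_le_add ?_ ?_))
  · have := loo_gauss_small (ε * R)
    rw [← loo_gauss_map v hv, Measure.map_apply (by fun_prop)
      (measurableSet_le (by fun_prop) (by fun_prop))] at this
    exact this
  · have := meas_ge_le_lintegral_div (μ := stdGaussian (EuclideanSpace ℝ (Fin n)))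
      (f := fun x => ENNReal.ofReal (‖x‖ ^ 2)) (by fun_prop) (ε := ENNReal.ofReal (R ^ 2))
      (by simp; positivity) (by simp)
    rw [loo_gauss_norm] at this
    refine this.trans (le_of_eq ?_)
    rw [ENNReal.ofReal_div_of_pos (by positivity), ENNReal.ofReal_natCast]

open ProbabilityTheory in
lemma loo_anticonc {n : ℕ} (μ : Measure (Metric.sphere (0 : EuclideanSpace ℝ (Fin n)) 1))
    [IsProbabilityMeasure μ]
    (hinv : ∀ g : EuclideanSpace ℝ (Fin n) ≃ₗᵢ[ℝ] EuclideanSpace ℝ (Fin n),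
        Measure.map (sphereRot g) μ = μ)
    (w : EuclideanSpace ℝ (Fin n)) (hw : w ≠ 0) (ε R : ℝ) (hε : 0 ≤ ε) (hR : 0 < R) :
    μ {v | |inner ℝ w v.val| ≤ ε * ‖w‖} ≤
      ENNReal.ofReal (2 * (ε * R)) + ENNReal.ofReal (n / R ^ 2) := by
  have hwp : 0 < ‖w‖ := norm_pos_iff.2 hw
  have hmeas : ∀ x : EuclideanSpace ℝ (Fin n), MeasurableSet
      {v : Metric.sphere (0 : EuclideanSpace ℝ (Fin n)) 1 | |inner ℝ x v.val| ≤ ε * ‖x‖} :=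
    fun x => measurableSet_le (by fun_prop) (by fun_prop)
  have hrot : ∀ g : EuclideanSpace ℝ (Fin n) ≃ₗᵢ[ℝ] EuclideanSpace ℝ (Fin n),
      Measurable (sphereRot g) := by
    intro g
    refine Measurable.subtype_mk ?_
    exact g.continuous.measurable.comp measurable_subtype_coe
  have key : ∀ x : EuclideanSpace ℝ (Fin n),
      μ {v | |inner ℝ w v.val| ≤ ε * ‖w‖} ≤ μ {v | |inner ℝ x v.val| ≤ ε * ‖x‖} := by
    intro x
    set c := ‖x‖ / ‖w‖ with hc
    have hc0 : 0 ≤ c := by positivity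
    have hn : ‖c • w‖ = ‖x‖ := by
      rw [norm_smul, Real.norm_of_nonneg hc0, hc]; field_simp
    let g := Submodule.reflection (ℝ ∙ (c • w - x))ᗮ
    have hg : g (c • w) = x := Submodule.reflection_sub hn
    rw [← hinv g, Measure.map_apply (hrot g) (hmeas x), hinv g]
    refine measure_mono fun v hv => ?_
    simp only [Set.mem_setOf_eq, Set.mem_preimage, sphereRot] at hv ⊢
    rw [← hg, g.inner_map_map, g.norm_map, norm_smul, Real.norm_of_nonneg hc0,
      real_inner_smul_left, abs_mul, abs_of_nonneg hc0]
    calc c * |inner ℝ w v.val| ≤ c * (ε * ‖w‖) := mul_le_mul_of_nonneg_left hv hc0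
      _ = _ := by ring
  let γ := stdGaussian (EuclideanSpace ℝ (Fin n))
  have hS : MeasurableSet {p : EuclideanSpace ℝ (Fin n) ×
      Metric.sphere (0 : EuclideanSpace ℝ (Fin n)) 1 | |inner ℝ p.1 p.2.val| ≤ ε * ‖p.1‖} :=
    measurableSet_le (by fun_prop) (by fun_prop)
  calc μ {v | |inner ℝ w v.val| ≤ ε * ‖w‖}
      = ∫⁻ _, μ {v | |inner ℝ w v.val| ≤ ε * ‖w‖} ∂γ := by simp [γ]
    _ ≤ ∫⁻ x, μ {v | |inner ℝ x v.val| ≤ ε * ‖x‖} ∂γ := lintegral_mono key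
    _ = (γ.prod μ) {p | |inner ℝ p.1 p.2.val| ≤ ε * ‖p.1‖} := (Measure.prod_apply hS).symm
    _ = ∫⁻ v, γ {x | |inner ℝ x v.val| ≤ ε * ‖x‖} ∂μ := Measure.prod_apply_symm hS
    _ ≤ ∫⁻ _, (ENNReal.ofReal (2 * (ε * R)) + ENNReal.ofReal (n / R ^ 2)) ∂μ :=
        lintegral_mono fun v => loo_gauss_bound v.val (by simpa using v.2) ε R hε hR
    _ = _ := by simp

/-- **Divergence in probability of the leave-one-out loss at the interpolation
threshold.** For each `n ≥ 2` let `μ n` be the uniform (rotation-invariant)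
probability measure on the unit sphere `S^{n-1} ⊂ ℝⁿ` and `y n ∈ {−1,+1}ⁿ`
arbitrary sign vectors, and set `L_n(v) = (1/n)(∑ i y n i * v i)² ∑ i 1/(v i)²`
(with `L_n(v) = +∞` when some coordinate of `v` vanishes, so that
`{L_n ≤ M} = {v | (∀ i, v i ≠ 0) ∧ (1/n)(∑ y v)² ∑ 1/v² ≤ M}`). Then for every
`M > 0`, `μ n {L_n ≤ M} → 0` as `n → ∞`. -/
theorem loo_loss_diverges_in_probability
    (μ : (n : ℕ) → Measure (Metric.sphere (0 : EuclideanSpace ℝ (Fin n)) 1))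
    (hprob : ∀ n : ℕ, 2 ≤ n → IsProbabilityMeasure (μ n))
    (hinv : ∀ n : ℕ, 2 ≤ n →
      ∀ g : EuclideanSpace ℝ (Fin n) ≃ₗᵢ[ℝ] EuclideanSpace ℝ (Fin n),
        Measure.map (sphereRot g) (μ n) = μ n)
    (y : (n : ℕ) → Fin n → ℝ)
    (hy : ∀ (n : ℕ) (i : Fin n), y n i = 1 ∨ y n i = -1) :
    ∀ M : ℝ, 0 < M →
      Tendsto
        (fun n : ℕ =>
          μ n {v : Metric.sphere (0 : EuclideanSpace ℝ (Fin n)) 1 |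
            (∀ i : Fin n, v.val i ≠ 0) ∧
            (1 / (n : ℝ)) * (∑ i : Fin n, y n i * v.val i) ^ 2 *
              (∑ i : Fin n, 1 / v.val i ^ 2) ≤ M})
        atTop (nhds 0) := by
  intro M hM
  have hlim : Tendsto (fun n : ℕ =>
      ENNReal.ofReal (2 * (√M / n * (n : ℝ) ^ (3 / 4 : ℝ))) +
        ENNReal.ofReal (n / ((n : ℝ) ^ (3 / 4 : ℝ)) ^ 2)) atTop (nhds 0) := by
    have h1 : Tendsto (fun n : ℕ => 2 * √M * (n : ℝ) ^ (-(1 / 4) : ℝ)) atTop (nhds 0) := by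
      simpa using ((tendsto_rpow_neg_atTop (by norm_num : (0 : ℝ) < 1 / 4)).comp
        tendsto_natCast_atTop_atTop).const_mul (2 * √M)
    have h2 : Tendsto (fun n : ℕ => (n : ℝ) ^ (-(1 / 2) : ℝ)) atTop (nhds 0) :=
      (tendsto_rpow_neg_atTop (by norm_num : (0 : ℝ) < 1 / 2)).comp
        tendsto_natCast_atTop_atTop
    have h3 := (ENNReal.tendsto_ofReal h1).add (ENNReal.tendsto_ofReal h2)
    simp only [ENNReal.ofReal_zero, add_zero] at h3
    refine h3.congr' ?_
    filter_upwards [eventually_ge_atTop 1] with n hn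
    have hn0 : (0 : ℝ) < n := by exact_mod_cast hn
    congr 2
    · have : (n : ℝ) ^ (-(1 / 4) : ℝ) = (n : ℝ) ^ (3 / 4 : ℝ) / n := by
        rw [← Real.rpow_sub_one hn0.ne']; norm_num
      rw [this]; ring
    · rw [← Real.rpow_natCast, ← Real.rpow_mul hn0.le]
      have : (n : ℝ) ^ (-(1 / 2) : ℝ) = (n : ℝ) ^ (1 - 3 / 4 * ((2 : ℕ) : ℝ)) := by norm_num
      rw [this, Real.rpow_sub hn0, Real.rpow_one]
  refine tendsto_of_tendsto_of_tendsto_of_le_of_le' tendsto_const_nhds hlim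
    (Eventually.of_forall fun _ => zero_le) ?_
  filter_upwards [eventually_ge_atTop 2] with n hn
  have hn0 : (0 : ℝ) < n := by exact_mod_cast (by omega : 0 < n)
  haveI := hprob n hn
  let w : EuclideanSpace ℝ (Fin n) := WithLp.toLp 2 (y n)
  have hy2 : ∀ i, y n i ^ 2 = 1 := fun i => by rcases hy n i with h | h <;> simp [h]
  have hw2 : ‖w‖ ^ 2 = n := by
    rw [EuclideanSpace.real_norm_sq_eq]
    simp [w, hy2]
  have hw : w ≠ 0 := by
    intro h
    rw [h] at hw2
    simp at hw2
    linarith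
  refine (measure_mono ?_).trans (loo_anticonc (μ n) (hinv n hn) w hw (√M / n)
    ((n : ℝ) ^ (3 / 4 : ℝ)) (by positivity) (by positivity))
  rintro v ⟨hv0, hv⟩
  simp only [Set.mem_setOf_eq]
  have hin : inner ℝ w v.val = ∑ i : Fin n, y n i * v.val i := by
    simp [PiLp.inner_apply, w, mul_comm]
  have hvn : ∑ i, v.val i ^ 2 = 1 := by
    rw [← EuclideanSpace.real_norm_sq_eq]
    have : ‖v.val‖ = 1 := by simpa using v.2
    rw [this]; norm_num
  have hcs : (n : ℝ) ^ 2 ≤ ∑ i : Fin n, 1 / v.val i ^ 2 := by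
    have := Finset.sum_sq_le_sum_mul_sum_of_sq_eq_mul (Finset.univ : Finset (Fin n))
      (r := fun _ => (1 : ℝ)) (f := fun i => v.val i ^ 2) (g := fun i => 1 / v.val i ^ 2)
      (fun i _ => by positivity) (fun i _ => by positivity)
      (fun i _ => by have := hv0 i; field_simp)
    rw [hvn] at this
    simpa using this
  rw [← hin] at hv
  have h1 : (1 / (n : ℝ)) * (inner ℝ w v.val) ^ 2 * (n : ℝ) ^ 2 ≤ M :=
    (mul_le_mul_of_nonneg_left hcs (by positivity)).trans hv
  refine abs_le_of_sq_le_sq ?_ (by positivity)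
  rw [mul_pow, hw2, div_pow, Real.sq_sqrt hM.le]
  have h2 : (1 / (n : ℝ)) * (inner ℝ w v.val) ^ 2 * (n : ℝ) ^ 2 = n * (inner ℝ w v.val) ^ 2 := by
    field_simp
  rw [h2] at h1
  have h3 : M / (n : ℝ) ^ 2 * n = M / n := by field_simp
  rw [h3, le_div_iff₀ hn0]
  linarith
end
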